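/- For every k ≥ 1 and every Δ ∈ {≤, =}, every context-free language of index at most k can be generated by a CD grammar system with at most two context-free components working in the (t∧Δk)-mode: L_k(CF) ⊆ L(CD_2, CF[−λ], (t∧Δk)), both with and without erasing rules. -/

import Mathlib

namespace CDHybrid

/-- Symbols: nonterminals are natural numbers, terminals come from `T`. -/
abbrev Symb (T : Type) := ℕ ⊕ T

/-- Sentential forms. -/
abbrev SForm (T : Type) := List (Symb T)

/-- A context-free rule `A → z`. -/
abbrev Rule (T : Type) := ℕ × SForm T

/-- Number of nonterminal occurrences in a sentential form. -/
def ntCount {T : Type} (x : SForm T) : ℕ := (x.filter Sum.isLeft).length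

/-- One rewriting step using some rule of the rule set `P`. -/
def RStep {T : Type} (P : List (Rule T)) (x y : SForm T) : Prop :=
  ∃ r ∈ P, ∃ u v : SForm T, x = u ++ Sum.inl r.1 :: v ∧ y = u ++ r.2 ++ v

/-- `m`-step derivation using only rules of `P`. -/
def StepsN {T : Type} (P : List (Rule T)) : ℕ → SForm T → SForm T → Prop
  | 0, x, y => x = y
  | m + 1, x, y => ∃ z, RStep P x z ∧ StepsN P m z y

/-- `m`-step derivation using only rules of `P`, all intermediate (and the final)
sentential forms having at most `b` occurrences of nonterminals. -/
def StepsNB {T : Type} (P : List (Rule T)) (b : ℕ) : ℕ → SForm T → SForm T → Prop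
  | 0, x, y => x = y
  | m + 1, x, y => ∃ z, RStep P x z ∧ ntCount z ≤ b ∧ StepsNB P b m z y

/-- Derivation modes of CD grammar systems. -/
inductive Mode where
  | eq : ℕ → Mode
  | le : ℕ → Mode
  | ge : ℕ → Mode
  | star : Mode
  | t : Mode
  | conj : Mode → Mode → Mode

/-- The predicate of a derivation mode: `modeOK P f m y` holds if an `m`-step
derivation by the component `P` ending in `y` is acceptable for mode `f`. -/
def modeOK {T : Type} (P : List (Rule T)) : Mode → ℕ → SForm T → Prop
  | .eq k, m, _ => m = k
  | .le k, m, _ => m ≤ k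
  | .ge k, m, _ => k ≤ m
  | .star, _, _ => True
  | .t, _, y => ¬ ∃ z, RStep P y z
  | .conj f g, m, y => modeOK P f m y ∧ modeOK P g m y

/-- A CD grammar system with context-free components. -/
structure CDGS (T : Type) where
  deg : ℕ
  start : ℕ
  comp : Fin deg → List (Rule T)

/-- λ-freeness: no erasing rules. -/
def CDGS.LamFree {T : Type} (G : CDGS T) : Prop :=
  ∀ i : Fin G.deg, ∀ r ∈ G.comp i, r.2 ≠ []

/-- One derivation step of a component of `G` in mode `f`. -/
def CDGS.ModeStep {T : Type} (G : CDGS T) (f : Mode) (x y : SForm T) : Prop :=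
  ∃ i : Fin G.deg, ∃ m : ℕ, StepsN (G.comp i) m x y ∧ modeOK (G.comp i) f m y

/-- One derivation step of a component of `G` in mode `f`, with all produced
sentential forms having at most `b` nonterminal occurrences. -/
def CDGS.ModeStepB {T : Type} (G : CDGS T) (f : Mode) (b : ℕ) (x y : SForm T) : Prop :=
  ∃ i : Fin G.deg, ∃ m : ℕ, StepsNB (G.comp i) b m x y ∧ modeOK (G.comp i) f m y

/-- The language generated by `G` in mode `f`. -/
def CDGS.lang {T : Type} (G : CDGS T) (f : Mode) : Set (List T) :=
  { w | Relation.TransGen (G.ModeStep f) [Sum.inl G.start] (w.map Sum.inr) }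

/-- The words of the language of `G` in mode `f` possessing a derivation of index
at most `b`, i.e., all sentential forms occurring in it have at most `b`
nonterminal occurrences. -/
def CDGS.langB {T : Type} (G : CDGS T) (f : Mode) (b : ℕ) : Set (List T) :=
  { w | ntCount ([Sum.inl G.start] : SForm T) ≤ b ∧
      Relation.TransGen (G.ModeStepB f b) [Sum.inl G.start] (w.map Sum.inr) }

/-- Two languages are considered equal iff they differ at most in the empty word. -/
def EqL {T : Type} (L₁ L₂ : Set (List T)) : Prop := L₁ \ {[]} = L₂ \ {[]}

/-- The family `L(CD_n, CF[−λ], f)`; `lf = true` forbids erasing rules. -/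
def CDFam (T : Type) (lf : Bool) (n : ℕ) (f : Mode) : Set (Set (List T)) :=
  { L | ∃ G : CDGS T, G.deg ≤ n ∧ (lf = true → G.LamFree) ∧ EqL (G.lang f) L }

/-- The family `L(CD_∞, CF[−λ], f)`. -/
def CDFamInf (T : Type) (lf : Bool) (f : Mode) : Set (Set (List T)) :=
  { L | ∃ G : CDGS T, (lf = true → G.LamFree) ∧ EqL (G.lang f) L }

/-- The family `L_m(CD_n, CF[−λ], f)` of such languages of index at most `m`. -/
def CDFamInd (T : Type) (lf : Bool) (n : ℕ) (f : Mode) (m : ℕ) : Set (Set (List T)) :=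
  { L | ∃ G : CDGS T, G.deg ≤ n ∧ (lf = true → G.LamFree) ∧ EqL (G.lang f) L ∧
      G.lang f ⊆ G.langB f m }

/-- The family `L_m(CD_∞, CF[−λ], f)`. -/
def CDFamIndInf (T : Type) (lf : Bool) (f : Mode) (m : ℕ) : Set (Set (List T)) :=
  { L | ∃ G : CDGS T, (lf = true → G.LamFree) ∧ EqL (G.lang f) L ∧ G.lang f ⊆ G.langB f m }

/-- The family `L_fin(CD_∞, CF[−λ], f)`. -/
def CDFamFinInf (T : Type) (lf : Bool) (f : Mode) : Set (Set (List T)) :=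
  { L | ∃ m : ℕ, 1 ≤ m ∧ L ∈ CDFamIndInf T lf f m }

/-- A context-free grammar. -/
structure CFG (T : Type) where
  start : ℕ
  rules : List (Rule T)

/-- The language generated by a context-free grammar. -/
def CFG.lang {T : Type} (G : CFG T) : Set (List T) :=
  { w | Relation.ReflTransGen (RStep G.rules) [Sum.inl G.start] (w.map Sum.inr) }

/-- The words of `G.lang` having a derivation of index at most `m`. -/
def CFG.langB {T : Type} (G : CFG T) (m : ℕ) : Set (List T) :=
  { w | ntCount ([Sum.inl G.start] : SForm T) ≤ m ∧
      Relation.ReflTransGen (fun x y => RStep G.rules x y ∧ ntCount y ≤ m)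
        [Sum.inl G.start] (w.map Sum.inr) }

/-- The family `L(CF)` of context-free languages. -/
def CFFam (T : Type) : Set (Set (List T)) := { L | ∃ G : CFG T, EqL G.lang L }

/-- The family `L_m(CF)` of context-free languages of index at most `m`. -/
def CFFamInd (T : Type) (m : ℕ) : Set (Set (List T)) :=
  { L | ∃ G : CFG T, EqL G.lang L ∧ G.lang ⊆ G.langB m }

/-- The family `L_fin(CF)` of context-free languages of finite index. -/
def CFFamFin (T : Type) : Set (Set (List T)) :=
  { L | ∃ m : ℕ, 1 ≤ m ∧ L ∈ CFFamInd T m }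

/-- A grammar is linear if every right-hand side contains at most one nonterminal. -/
def CFG.Linear {T : Type} (G : CFG T) : Prop := ∀ r ∈ G.rules, ntCount r.2 ≤ 1

/-- The family `L(LIN)` of linear context-free languages. -/
def LinFam (T : Type) : Set (Set (List T)) :=
  { L | ∃ G : CFG T, G.Linear ∧ EqL G.lang L }

/-- The family `L(FIN)` of finite languages. -/
def FinFam (T : Type) : Set (Set (List T)) := { L | L.Finite }

/-- A programmed grammar with context-free rules. -/
structure PG (T : Type) where
  start : ℕ
  nLab : ℕ
  rule : Fin nLab → Rule T
  succ : Fin nLab → Set (Fin nLab)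
  fail : Fin nLab → Set (Fin nLab)

def PG.LamFree {T : Type} (G : PG T) : Prop := ∀ r : Fin G.nLab, (G.rule r).2 ≠ []

/-- No appearance checking: all failure fields are empty. -/
def PG.NoAC {T : Type} (G : PG T) : Prop := ∀ r : Fin G.nLab, G.fail r = ∅

/-- One step of a programmed grammar on pairs (sentential form, label). -/
def PG.PStep {T : Type} (G : PG T) (p q : SForm T × Fin G.nLab) : Prop :=
  (∃ u v : SForm T, p.1 = u ++ Sum.inl (G.rule p.2).1 :: v ∧
      q.1 = u ++ (G.rule p.2).2 ++ v ∧ q.2 ∈ G.succ p.2) ∨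
  (Sum.inl (G.rule p.2).1 ∉ p.1 ∧ q.1 = p.1 ∧ q.2 ∈ G.fail p.2)

/-- The language generated by a programmed grammar. -/
def PG.lang {T : Type} (G : PG T) : Set (List T) :=
  { w | ∃ r₁ r₂ : Fin G.nLab,
      Relation.ReflTransGen G.PStep ([Sum.inl G.start], r₁) (w.map Sum.inr, r₂) }

/-- The words of `G.lang` having a derivation of index at most `m`. -/
def PG.langB {T : Type} (G : PG T) (m : ℕ) : Set (List T) :=
  { w | ∃ r₁ r₂ : Fin G.nLab, ntCount ([Sum.inl G.start] : SForm T) ≤ m ∧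
      Relation.ReflTransGen (fun p q => G.PStep p q ∧ ntCount q.1 ≤ m)
        ([Sum.inl G.start], r₁) (w.map Sum.inr, r₂) }

/-- The family `L_m(P, CF[−λ][, ac])`: programmed languages of index at most `m`;
`ac = false` forbids appearance checking, `lf = true` forbids erasing rules. -/
def PFamInd (T : Type) (lf ac : Bool) (m : ℕ) : Set (Set (List T)) :=
  { L | ∃ G : PG T, (lf = true → G.LamFree) ∧ (ac = false → G.NoAC) ∧
      EqL G.lang L ∧ G.lang ⊆ G.langB m }

/-- The family `L_fin(P, CF[−λ][, ac])` of programmed languages of finite index. -/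
def PFamFin (T : Type) (lf ac : Bool) : Set (Set (List T)) :=
  { L | ∃ m : ℕ, 1 ≤ m ∧ L ∈ PFamInd T lf ac m }


open Relation

theorem ntCount_append {T : Type} (x y : SForm T) :
    ntCount (x ++ y) = ntCount x + ntCount y := by
  simp [ntCount]

theorem ntCount_inl {T : Type} (A : ℕ) (x : SForm T) :
    ntCount (Sum.inl A :: x) = ntCount x + 1 := by
  unfold ntCount
  rw [List.filter_cons_of_pos (by rfl)]; rfl

theorem RStep.ctx {T : Type} {P : List (Rule T)} {x y : SForm T} (p q : SForm T)
    (h : RStep P x y) : RStep P (p ++ x ++ q) (p ++ y ++ q) := by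
  obtain ⟨r, hr, u, v, rfl, rfl⟩ := h
  exact ⟨r, hr, p ++ u, v ++ q, by simp, by simp⟩

theorem rt_ctx {T : Type} {P : List (Rule T)} {x y : SForm T} (p q : SForm T)
    (h : ReflTransGen (RStep P) x y) :
    ReflTransGen (RStep P) (p ++ x ++ q) (p ++ y ++ q) := by
  induction h with
  | refl => exact .refl
  | tail _ h ih => exact ih.tail (h.ctx p q)

/-- nullable nonterminals -/
def Nul {T : Type} (P : List (Rule T)) (A : ℕ) : Prop :=
  ReflTransGen (RStep P) [Sum.inl A] []

/-- deletion of some nullable nonterminals -/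
inductive Del {T : Type} (P : List (Rule T)) : SForm T → SForm T → Prop
  | nil : Del P [] []
  | keep (s : Symb T) {x y : SForm T} : Del P x y → Del P (s :: x) (s :: y)
  | drop (A : ℕ) {x y : SForm T} : Nul P A → Del P x y → Del P (Sum.inl A :: x) y

theorem Del.refl {T : Type} (P : List (Rule T)) (x : SForm T) : Del P x x := by
  induction x with
  | nil => exact .nil
  | cons s x ih => exact .keep s ih

theorem Del.append {T : Type} {P : List (Rule T)} {x x' y y' : SForm T}
    (h : Del P x x') (h' : Del P y y') : Del P (x ++ y) (x' ++ y') := by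
  induction h with
  | nil => exact h'
  | keep s _ ih => exact .keep s ih
  | drop A hA _ ih => exact .drop A hA ih

theorem Del.split {T : Type} {P : List (Rule T)} (x : SForm T) : ∀ {y z : SForm T},
    Del P (x ++ y) z → ∃ x' y', z = x' ++ y' ∧ Del P x x' ∧ Del P y y' := by
  induction x with
  | nil => intro y z h; exact ⟨[], z, rfl, .nil, h⟩
  | cons s x ih =>
    intro y z h
    cases h with
    | keep s h =>
      obtain ⟨x', y', rfl, h1, h2⟩ := ih h
      exact ⟨s :: x', y', rfl, .keep s h1, h2⟩
    | drop A hA h =>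
      obtain ⟨x', y', rfl, h1, h2⟩ := ih h
      exact ⟨x', y', rfl, .drop A hA h1, h2⟩

theorem Del.derives {T : Type} {P : List (Rule T)} {x y : SForm T} (h : Del P x y) :
    ReflTransGen (RStep P) x y := by
  induction h with
  | nil => exact .refl
  | keep s _ ih => simpa using rt_ctx [s] [] ih
  | @drop A x y hA _ ih =>
    have := rt_ctx [] x hA
    simp only [List.nil_append, List.cons_append] at this
    exact this.trans ih

theorem Del.sublist {T : Type} {P : List (Rule T)} {x y : SForm T} (h : Del P x y) :
    y.Sublist x := by
  induction h with
  | nil => simp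
  | keep s _ ih => exact ih.cons_cons s
  | drop A _ _ ih => exact ih.cons _

theorem Del.count {T : Type} {P : List (Rule T)} {x y : SForm T} (h : Del P x y) :
    ntCount y ≤ ntCount x :=
  (h.sublist.filter _).length_le

open Classical in
/-- the λ-free rules -/
noncomputable def lfRules {T : Type} (P : List (Rule T)) : List (Rule T) :=
  P.flatMap fun r => (r.2.sublists.filter fun z => decide (Del P r.2 z ∧ z ≠ [])).map
    fun z => (r.1, z)

theorem mem_lfRules {T : Type} {P : List (Rule T)} {s : Rule T} :
    s ∈ lfRules P ↔ ∃ r ∈ P, s.1 = r.1 ∧ Del P r.2 s.2 ∧ s.2 ≠ [] := by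
  obtain ⟨A, z⟩ := s
  simp only [lfRules, List.mem_flatMap, List.mem_map, List.mem_filter, List.mem_sublists,
    decide_eq_true_eq, Prod.mk.injEq]
  constructor
  · rintro ⟨r, hr, z', ⟨_, h1, h2⟩, rfl, rfl⟩
    exact ⟨r, hr, rfl, h1, h2⟩
  · rintro ⟨r, hr, rfl, h1, h2⟩
    exact ⟨r, hr, z, ⟨h1.sublist, h1, h2⟩, rfl, rfl⟩

theorem lf_sound {T : Type} {P : List (Rule T)} {x y : SForm T}
    (h : RStep (lfRules P) x y) : ReflTransGen (RStep P) x y := by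
  obtain ⟨s, hs, u, v, rfl, rfl⟩ := h
  obtain ⟨r, hr, h1, h2, -⟩ := mem_lfRules.1 hs
  refine ReflTransGen.head (b := u ++ r.2 ++ v) ⟨r, hr, u, v, by rw [h1], rfl⟩ ?_
  exact rt_ctx u v h2.derives

theorem lf_complete {T : Type} {P : List (Rule T)} {k : ℕ} {x w : SForm T}
    (h : ReflTransGen (fun x y => RStep P x y ∧ ntCount y ≤ k) x w) :
    ∃ y, Del P x y ∧ ReflTransGen (fun x y => RStep (lfRules P) x y ∧ ntCount y ≤ k) y w := by
  induction h using ReflTransGen.head_induction_on with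
  | refl => exact ⟨w, .refl _ _, .refl⟩
  | head h _ ih =>
    obtain ⟨⟨r, hr, u, v, rfl, rfl⟩, hc⟩ := h
    obtain ⟨y, hd, hy⟩ := ih
    have hyc := hd.count.trans hc
    obtain ⟨uz, v', rfl, h1, hv⟩ := Del.split _ hd
    obtain ⟨u', z', rfl, hu, hz⟩ := Del.split _ h1
    by_cases hz0 : z' = []
    · subst hz0
      refine ⟨u' ++ v', hu.append (.drop _ ?_ hv), by simpa using hy⟩
      exact ReflTransGen.head ⟨r, hr, [], [], rfl, by simp⟩ hz.derives
    · refine ⟨u' ++ Sum.inl r.1 :: v', hu.append (.keep _ hv), ReflTransGen.head ⟨?_, hyc⟩ hy⟩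
      exact ⟨(r.1, z'), mem_lfRules.2 ⟨r, hr, rfl, hz, hz0⟩, u', v', rfl, rfl⟩

theorem lf_nil {T : Type} {P : List (Rule T)} {k : ℕ} {w : SForm T}
    (h : ReflTransGen (fun x y => RStep P x y ∧ ntCount y ≤ k) [] w) : w = [] := by
  rcases h.cases_head with h | ⟨y, ⟨⟨r, _, u, v, h, _⟩, _⟩, _⟩
  · exact h.symm
  · simp at h

/-- encoding with colour `b` -/
def enc {T : Type} (b : ℕ) (x : SForm T) : SForm T := x.map (Sum.map (fun A => 2 * A + b) id)

/-- removal of the colour -/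
def dec {T : Type} (x : SForm T) : SForm T := x.map (Sum.map (fun A => A / 2) id)

theorem dec_enc {T : Type} {b : ℕ} (hb : b ≤ 1) (x : SForm T) : dec (enc b x) = x := by
  simp only [dec, enc, List.map_map]
  conv_rhs => rw [← List.map_id x]
  apply List.map_congr_left
  rintro (A | a) _
  · simp; omega
  · simp

theorem dec_append {T : Type} (x y : SForm T) : dec (x ++ y) = dec x ++ dec y := by
  simp [dec]

theorem enc_append {T : Type} (b : ℕ) (x y : SForm T) : enc b (x ++ y) = enc b x ++ enc b y := by
  simp [enc]

/-- the component of colour `b` -/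
def cmp {T : Type} (P : List (Rule T)) (b : ℕ) : List (Rule T) :=
  P.flatMap fun r => [(2 * r.1 + b, [Sum.inl (2 * r.1 + b)]),
    (2 * r.1 + b, [Sum.inl (2 * r.1 + (1 - b))]), (2 * r.1 + b, enc (1 - b) r.2)]

theorem mem_cmp {T : Type} {P : List (Rule T)} {b : ℕ} {s : Rule T} :
    s ∈ cmp P b ↔ ∃ r ∈ P, s = (2 * r.1 + b, [Sum.inl (2 * r.1 + b)]) ∨
      s = (2 * r.1 + b, [Sum.inl (2 * r.1 + (1 - b))]) ∨ s = (2 * r.1 + b, enc (1 - b) r.2) := by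
  simp [cmp, List.mem_flatMap]

theorem cmp_sound {T : Type} {P : List (Rule T)} {b : ℕ} (hb : b ≤ 1) {x y : SForm T}
    (h : RStep (cmp P b) x y) : ReflTransGen (RStep P) (dec x) (dec y) := by
  obtain ⟨s, hs, u, v, rfl, rfl⟩ := h
  have e1 : ∀ A, (2 * A + b) / 2 = A := by intro A; omega
  have e2 : ∀ A, (2 * A + (1 - b)) / 2 = A := by intro A; omega
  obtain ⟨r, hr, rfl | rfl | rfl⟩ := mem_cmp.1 hs
  · simp only [List.append_assoc, List.singleton_append]; exact .refl
  · simp only [dec, List.map_append, List.map_cons, Sum.map_inl, e1, e2,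
      List.append_assoc, List.singleton_append]
    exact .refl
  · refine .single ⟨r, hr, dec u, dec v, ?_, ?_⟩
    · simp [dec, e1]
    · simp only [dec_append]; rw [dec_enc (by omega)]

theorem StepsN.sound {T : Type} {P : List (Rule T)} {b : ℕ} (hb : b ≤ 1) (m : ℕ) :
    ∀ {x y : SForm T}, StepsN (cmp P b) m x y → ReflTransGen (RStep P) (dec x) (dec y) := by
  induction m with
  | zero => rintro x y h; cases h; exact .refl
  | succ m ih => rintro x y ⟨z, h, h'⟩; exact (cmp_sound hb h).trans (ih h')

theorem StepsN.trans {T : Type} {P : List (Rule T)} (m n : ℕ) :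
    ∀ {x y z : SForm T}, StepsN P m x y → StepsN P n y z → StepsN P (m + n) x z := by
  induction m with
  | zero => rintro x y z h h'; cases h; simpa using h'
  | succ m ih =>
    rintro x y z ⟨a, h, h1⟩ h'
    rw [Nat.succ_add]
    exact ⟨a, h, ih h1 h'⟩

theorem StepsN.one {T : Type} {P : List (Rule T)} {x y : SForm T} (h : RStep P x y) :
    StepsN P 1 x y := ⟨y, h, rfl⟩

theorem StepsN.loop {T : Type} {P : List (Rule T)} {x : SForm T} (h : RStep P x x) (j : ℕ) :
    StepsN P j x x := by
  induction j with
  | zero => rfl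
  | succ j ih => exact ⟨x, h, ih⟩

/-- all nonterminals are left-hand sides -/
def Good {T : Type} (P : List (Rule T)) (x : SForm T) : Prop :=
  ∀ A, Sum.inl A ∈ x → ∃ r ∈ P, r.1 = A

theorem StepsN.conv {T : Type} {P : List (Rule T)} {b : ℕ} (u : SForm T) :
    ∀ (_ : Good P u) (p q : SForm T),
      StepsN (cmp P b) (ntCount u) (p ++ enc b u ++ q) (p ++ enc (1 - b) u ++ q) := by
  induction u with
  | nil => intro _ p q; rfl
  | cons s u ih =>
    intro hg p q
    have hu : Good P u := fun A hA => hg A (List.mem_cons_of_mem _ hA)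
    rcases s with A | a
    · obtain ⟨r, hr, rfl⟩ := hg A List.mem_cons_self
      have h2 := ih hu (p ++ [Sum.inl (2 * r.1 + (1 - b))]) q
      have h1 : RStep (cmp P b) (p ++ enc b (Sum.inl r.1 :: u) ++ q)
          (p ++ [Sum.inl (2 * r.1 + (1 - b))] ++ enc b u ++ q) :=
        ⟨(2 * r.1 + b, [Sum.inl (2 * r.1 + (1 - b))]), mem_cmp.2 ⟨r, hr, .inr (.inl rfl)⟩,
          p, enc b u ++ q, by simp [enc], by simp⟩
      have e : ntCount (Sum.inl r.1 :: u : SForm T) = ntCount u + 1 := ntCount_inl _ _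
      rw [e]
      refine ⟨_, h1, ?_⟩
      simpa [enc] using h2
    · have h2 := ih hu (p ++ [Sum.inr a]) q
      have e : ntCount (Sum.inr a :: u : SForm T) = ntCount u := by simp [ntCount]
      rw [e]
      simpa [enc] using h2

theorem cmp_stop {T : Type} {P : List (Rule T)} {b : ℕ} (hb : b ≤ 1) (y : SForm T) :
    ¬ ∃ z, RStep (cmp P b) (enc (1 - b) y) z := by
  rintro ⟨z, s, hs, u, v, h, -⟩
  have hs1 : ∃ A, s.1 = 2 * A + b := by
    obtain ⟨r, hr, rfl | rfl | rfl⟩ := mem_cmp.1 hs <;> exact ⟨r.1, rfl⟩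
  obtain ⟨A, hA⟩ := hs1
  have hm : (Sum.inl s.1 : Symb T) ∈ enc (1 - b) y := by rw [h]; simp
  simp only [enc, List.mem_map] at hm
  obtain ⟨B | a, _, hB⟩ := hm
  · simp at hB; omega
  · simp at hB

/-- the CD grammar system -/
def cdg {T : Type} (S : ℕ) (P : List (Rule T)) : CDGS T := ⟨2, 2 * S, fun i => cmp P i.val⟩

theorem cd_step {T : Type} {S : ℕ} {P : List (Rule T)} {k : ℕ} {d : ℕ → Mode}
    (hd : d = Mode.le ∨ d = Mode.eq) {b : ℕ} (hb : b ≤ 1) {x y : SForm T}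
    (hx : ntCount x ≤ k) (hg : Good P x) (h : RStep P x y) :
    (cdg S P).ModeStep (Mode.conj Mode.t (d k)) (enc b x) (enc (1 - b) y) := by
  refine ⟨(⟨b, by omega⟩ : Fin 2), k, ?_, cmp_stop hb y, ?_⟩
  · show StepsN (cmp P b) k _ _
    obtain ⟨r, hr, u, v, rfl, rfl⟩ := h
    have e : ntCount (u ++ Sum.inl r.1 :: v) = ntCount u + (1 + ntCount v) := by
      rw [ntCount_append, ntCount_inl]; omega
    have h0 : StepsN (cmp P b) (k - ntCount (u ++ Sum.inl r.1 :: v))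
        (enc b (u ++ Sum.inl r.1 :: v)) (enc b (u ++ Sum.inl r.1 :: v)) := by
      apply StepsN.loop
      exact ⟨(2 * r.1 + b, [Sum.inl (2 * r.1 + b)]), mem_cmp.2 ⟨r, hr, .inl rfl⟩,
        enc b u, enc b v, by simp [enc], by simp [enc]⟩
    have h1 := StepsN.conv (P := P) (b := b) u (fun A hA => hg A (by simp [hA])) []
      (enc b (Sum.inl r.1 :: v))
    have h2 : StepsN (cmp P b) 1 ([] ++ enc (1 - b) u ++ enc b (Sum.inl r.1 :: v))
        (enc (1 - b) (u ++ r.2) ++ enc b v ++ []) :=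
      StepsN.one ⟨(2 * r.1 + b, enc (1 - b) r.2), mem_cmp.2 ⟨r, hr, .inr (.inr rfl)⟩,
        enc (1 - b) u, enc b v, by simp [enc], by simp [enc]⟩
    have h3 := StepsN.conv (P := P) (b := b) v (fun A hA => hg A (by simp [hA]))
      (enc (1 - b) (u ++ r.2)) []
    have h4 := StepsN.trans _ _ h1 (StepsN.trans _ _ h2 h3)
    rw [← e, List.nil_append, ← enc_append] at h4
    have h5 := StepsN.trans _ _ h0 h4
    rw [Nat.sub_add_cancel hx, List.append_nil, ← enc_append] at h5
    exact h5
  · rcases hd with rfl | rfl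
    · exact le_refl k
    · exact rfl

theorem enc_term {T : Type} (b : ℕ) (w : List T) :
    enc b (w.map Sum.inr) = w.map Sum.inr := by
  simp [enc]

theorem cd_complete {T : Type} {S : ℕ} {P : List (Rule T)} {k : ℕ} {d : ℕ → Mode}
    (hd : d = Mode.le ∨ d = Mode.eq) {x : SForm T} {w : List T}
    (h : ReflTransGen (fun x y => RStep P x y ∧ ntCount y ≤ k) x (w.map Sum.inr)) :
    Good P x ∧ (ntCount x ≤ k → ∀ b ≤ 1, ReflTransGen
      ((cdg S P).ModeStep (Mode.conj Mode.t (d k))) (enc b x) (w.map Sum.inr)) := by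
  induction h using ReflTransGen.head_induction_on with
  | refl =>
    refine ⟨fun A hA => by simp at hA, fun _ b _ => ?_⟩
    rw [enc_term]
  | @head x' y' h _ ih =>
    obtain ⟨hs, hc⟩ := h
    have hg : Good P x' := by
      obtain ⟨r, hr, u, v, rfl, rfl⟩ := hs
      intro A hA
      simp only [List.mem_append, List.mem_cons] at hA
      rcases hA with hA | hA | hA
      · exact ih.1 A (by simp [hA])
      · exact ⟨r, hr, (Sum.inl.inj hA).symm⟩
      · exact ih.1 A (by simp [hA])
    exact ⟨hg, fun hx b hb => ReflTransGen.head (cd_step hd hb hx hg hs)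
      (ih.2 hc (1 - b) (by omega))⟩

theorem cd_sound {T : Type} {S : ℕ} {P : List (Rule T)} {f : Mode} {x y : SForm T}
    (h : TransGen ((cdg S P).ModeStep f) x y) : ReflTransGen (RStep P) (dec x) (dec y) := by
  have key : ∀ {x y : SForm T}, (cdg S P).ModeStep f x y →
      ReflTransGen (RStep P) (dec x) (dec y) := by
    rintro x y ⟨i, m, h, -⟩
    have hi : i.val ≤ 1 := by have := i.isLt; change i.val < 2 at this; omega
    exact StepsN.sound hi m h
  induction h with
  | single h => exact key h
  | tail _ h ih => exact ih.trans (key h)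

theorem enc_ne_nil {T : Type} {b : ℕ} {x : SForm T} (h : x ≠ []) : enc b x ≠ [] := by
  simpa [enc] using h

/-- For every k ≥ 1 and every Δ ∈ {≤, =},
L_k(CF) ⊆ L(CD_2, CF[−λ], (t∧Δk)), both with and without erasing rules. -/
theorem stmt2 (lf : Bool) (k : ℕ) (hk : 1 ≤ k) (d : ℕ → Mode)
    (hd : d = Mode.le ∨ d = Mode.eq) :
    CFFamInd ℕ k ⊆ CDFam ℕ lf 2 (Mode.conj Mode.t (d k)) := by
  rintro L ⟨G, hL, hB⟩
  refine ⟨cdg G.start (lfRules G.rules), le_refl 2, fun _ => ?_, Eq.trans ?_ hL⟩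
  · intro i s hs
    obtain ⟨r, hr, rfl | rfl | rfl⟩ := mem_cmp.1 hs
    · simp
    · simp
    · obtain ⟨_, _, _, _, h⟩ := mem_lfRules.1 hr
      exact enc_ne_nil h
  · ext w
    constructor
    · rintro ⟨hw, hne⟩
      refine ⟨?_, hne⟩
      have h := cd_sound hw
      rw [← enc_term 0 w, dec_enc (by omega)] at h
      have e : dec [Sum.inl (cdg G.start (lfRules G.rules)).start] =
          ([Sum.inl G.start] : SForm ℕ) := by simp [dec, cdg]
      rw [e] at h
      show ReflTransGen _ _ _
      clear hw
      generalize (w.map Sum.inr : SForm ℕ) = z at h ⊢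
      induction h with
      | refl => exact .refl
      | tail _ h ih => exact ih.trans (lf_sound h)
    · rintro ⟨hw, hne⟩
      refine ⟨?_, hne⟩
      obtain ⟨hS, hw'⟩ := hB hw
      obtain ⟨y, hy, hyw⟩ := lf_complete hw'
      have hy' : y = [Sum.inl G.start] := by
        cases hy with
        | keep s h => cases h; rfl
        | drop A _ h =>
          cases h
          exact absurd (by simpa using lf_nil hyw) hne
      subst hy'
      have h := (cd_complete (S := G.start) hd hyw).2 hS 0 (by omega)
      rcases reflTransGen_iff_eq_or_transGen.1 h with h | h
      · cases w with
        | nil => simp at hne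
        | cons a w => simp [enc] at h
      · exact h

end CDHybrid
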